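/- Let X be a real normed vector space, m a natural number, and K ⊆ X a subset with K = −K. Then d^m(K) ≤ E_ada^m(K), i.e., the Gelfand m-width is a lower bound for the adaptive compressive m-width. -/

import Mathlib

/-!
Fix an adaptive scheme `Λ` and a reconstruction map `Δ`. Freezing the scheme along the all-zero
outcome history gives one linear map `A x = (Λ j 0 x)_j`, and every `x ∈ ker A` has zero adaptive
measurements (`AdaptiveScheme.measMap_eq_zero`). Hence for `x ∈ K ∩ ker A` the points `x` and `-x`
of `K` are both reconstructed as the same `Δ 0`, and the triangle inequality
`2 ‖x‖ ≤ ‖x - Δ 0‖ + ‖-x - Δ 0‖` shows that `‖x‖` is at most the worst-case error of `(Λ, Δ)`.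
-/

open scoped ENNReal Pointwise

/-- An adaptive measurement scheme of length `m` on `X`: the `j`-th linear functional
is selected based on the vector of previous `j` measurement outcomes. -/
def AdaptiveScheme (X : Type*) [NormedAddCommGroup X] [NormedSpace ℝ X] (m : ℕ) :=
  ∀ j : Fin m, ((Fin (j : ℕ)) → ℝ) → (X →ₗ[ℝ] ℝ)

/-- The measurement map `F_Λ` induced by an adaptive scheme: the `j`-th outcome is obtained
by applying the functional selected from the previous outcomes. -/
noncomputable def AdaptiveScheme.measMap {X : Type*} [NormedAddCommGroup X] [NormedSpace ℝ X]
    {m : ℕ} (Λ : AdaptiveScheme X m) (x : X) : Fin m → ℝ := fun j =>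
  Λ j (fun i => Λ.measMap x ⟨i, i.isLt.trans j.isLt⟩) x
termination_by j => (j : ℕ)
decreasing_by exact i.isLt

/-- The Gelfand `m`-width of a subset `K` of `X`. -/
noncomputable def gelfandWidth {X : Type*} [NormedAddCommGroup X] [NormedSpace ℝ X]
    (m : ℕ) (K : Set X) : ℝ≥0∞ :=
  ⨅ A : X →ₗ[ℝ] (Fin m → ℝ), ⨆ x ∈ K ∩ (LinearMap.ker A : Set X), (‖x‖₊ : ℝ≥0∞)

/-- The (non-adaptive) compressive `m`-width of a subset `K` of `X`. -/
noncomputable def compWidth {X : Type*} [NormedAddCommGroup X] [NormedSpace ℝ X]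
    (m : ℕ) (K : Set X) : ℝ≥0∞ :=
  ⨅ (A : X →ₗ[ℝ] (Fin m → ℝ)) (Δ : (Fin m → ℝ) → X), ⨆ x ∈ K, (‖x - Δ (A x)‖₊ : ℝ≥0∞)

/-- The adaptive compressive `m`-width of a subset `K` of `X`. -/
noncomputable def adaCompWidth {X : Type*} [NormedAddCommGroup X] [NormedSpace ℝ X]
    (m : ℕ) (K : Set X) : ℝ≥0∞ :=
  ⨅ (Λ : AdaptiveScheme X m) (Δ : (Fin m → ℝ) → X),
    ⨆ x ∈ K, (‖x - Δ (Λ.measMap x)‖₊ : ℝ≥0∞)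

/-- The non-adaptive measurement map obtained from an adaptive scheme by always choosing the
functional that the scheme would choose after a history of zero outcomes. -/
def AdaptiveScheme.zeroMap {X : Type*} [NormedAddCommGroup X] [NormedSpace ℝ X]
    {m : ℕ} (Λ : AdaptiveScheme X m) : X →ₗ[ℝ] (Fin m → ℝ) :=
  LinearMap.pi fun j => Λ j 0

theorem AdaptiveScheme.measMap_eq_zero {X : Type*} [NormedAddCommGroup X] [NormedSpace ℝ X]
    {m : ℕ} (Λ : AdaptiveScheme X m) {x : X} (hx : Λ.zeroMap x = 0) : Λ.measMap x = 0 := by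
  have key : ∀ (n : ℕ) (hn : n < m), Λ.measMap x ⟨n, hn⟩ = 0 := by
    intro n
    induction n using Nat.strong_induction_on with
    | _ n ih =>
      intro hn
      have hprev : (fun i : Fin n => Λ.measMap x ⟨i, i.isLt.trans hn⟩) = 0 :=
        funext fun i => ih i i.isLt (i.isLt.trans hn)
      rw [AdaptiveScheme.measMap]
      exact (congrArg (fun v => Λ ⟨n, hn⟩ v x) hprev).trans (congrFun hx ⟨n, hn⟩)
  exact funext fun j => key j j.isLt

/-- For a symmetric set `K`, the Gelfand `m`-width lower-bounds the adaptive compressive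
`m`-width. -/
theorem gelfandWidth_le_adaCompWidth
    {X : Type*} [NormedAddCommGroup X] [NormedSpace ℝ X] {m : ℕ}
    (K : Set X) (hK : K = -K) :
    gelfandWidth m K ≤ adaCompWidth m K := by
  refine le_iInf₂ fun Λ Δ => (iInf_le _ Λ.zeroMap).trans (iSup₂_le fun x hx => ?_)
  obtain ⟨hxK, hxA⟩ := hx
  have hA : Λ.zeroMap x = 0 := hxA
  have hnegK : -x ∈ K := by
    rw [hK]
    simpa using hxK
  have h₁ := le_iSup₂ (f := fun y (_ : y ∈ K) => (‖y - Δ (Λ.measMap y)‖₊ : ℝ≥0∞)) x hxK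
  have h₂ := le_iSup₂ (f := fun y (_ : y ∈ K) => (‖y - Δ (Λ.measMap y)‖₊ : ℝ≥0∞)) (-x) hnegK
  rw [Λ.measMap_eq_zero hA] at h₁
  rw [Λ.measMap_eq_zero (x := -x) (by rw [map_neg, hA, neg_zero])] at h₂
  -- The larger of the two errors is at least their average, hence at least `‖x‖`.
  refine le_trans ?_ (max_le h₁ h₂)
  rw [← ENNReal.coe_max, ENNReal.coe_le_coe, ← NNReal.coe_le_coe, NNReal.coe_max]
  simp only [coe_nnnorm]
  have htri : ‖(2 : ℝ) • x‖ ≤ ‖x - Δ 0‖ + ‖-x - Δ 0‖ := by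
    have h := norm_sub_le (x - Δ 0) (-x - Δ 0)
    rwa [show x - Δ 0 - (-x - Δ 0) = (2 : ℝ) • x by rw [two_smul]; abel] at h
  rw [norm_smul, Real.norm_ofNat] at htri
  linarith [le_max_left ‖x - Δ 0‖ ‖-x - Δ 0‖, le_max_right ‖x - Δ 0‖ ‖-x - Δ 0‖]
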